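/- Assume (X, T, Ω, P, θ) is a random countable topological Markov chain with the b.i.p. property and conditions (H) and (S) hold, and let λ, {h_ω}, {μ_ω} be as in the random Ruelle theorem (ℒ_ω(h_ω) = λ_ω h_{θω}, ℒ*_ω(μ_{θω}) = λ_ω μ_ω, ∫ h_ω dμ_ω = 1 a.s.). Then the probability measure on X := {(ω,x) : x ∈ X_ω} given by h_ω dμ_ω dP(ω) is invariant and ergodic for the skew product T(ω,x) := (θω, T_ω x). -/

import Mathlib

open MeasureTheory Real Filter

namespace RTMC

/-- The ambient sequence space `ℕ^ℕ`. -/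
abbrev Seq := ℕ → ℕ

/-- The shift map. -/
def shift (x : Seq) : Seq := fun i => x (i + 1)

/-- Prepend one symbol to a sequence. -/
def cons (a : ℕ) (x : Seq) : Seq := fun i =>
  match i with
  | 0 => a
  | j + 1 => x j

/-- `x` and `y` agree in their first `k` coordinates. -/
def agrees (x y : Seq) (k : ℕ) : Prop := ∀ i < k, x i = y i

open scoped Classical in
/-- The shift metric `d_r(x,y) = r^{min{i : x_i ≠ y_i}}`. -/
noncomputable def dr (r : ℝ) (x y : Seq) : ℝ :=
  if x = y then 0 else r ^ sInf {i | x i ≠ y i}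

/-- Prepend the first `len` symbols of `w` to `x` (the inverse branch `τ_w`). -/
def prepend (w : ℕ → ℕ) (len : ℕ) (x : Seq) : Seq := fun i =>
  if i < len then w i else x (i - len)

variable {Ω : Type*}

/-- The fibre `X_ω` of a random topological Markov chain with alphabets `W` and
transition matrices `A` (`A ω i j` means `α^ω_{ij} = 1`). -/
def Xfib (θ : Ω → Ω) (W : Ω → Set ℕ) (A : Ω → ℕ → ℕ → Prop) (ω : Ω) : Set Seq :=
  {x | (∀ i, x i ∈ W (θ^[i] ω)) ∧ ∀ i, A (θ^[i] ω) (x i) (x (i + 1))}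

open scoped Classical in
/-- The Ruelle operator `ℒ_ω(f)(x) = Σ_{T_ω y = x} e^{φ_ω(y)} f(y)`, for `x ∈ X_{θω}`. -/
noncomputable def Lr (θ : Ω → Ω) (W : Ω → Set ℕ) (A : Ω → ℕ → ℕ → Prop) (φ : Ω → Seq → ℝ)
    (ω : Ω) (f : Seq → ℝ) (x : Seq) : ℝ :=
  ∑' a : ℕ, if cons a x ∈ Xfib θ W A ω then Real.exp (φ ω (cons a x)) * f (cons a x) else 0

/-- The iterated Ruelle operator `ℒ^n_ω = ℒ_{θ^{n-1}ω} ∘ ⋯ ∘ ℒ_ω`. -/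
noncomputable def Lrn (θ : Ω → Ω) (W : Ω → Set ℕ) (A : Ω → ℕ → ℕ → Prop) (φ : Ω → Seq → ℝ)
    (ω : Ω) : ℕ → (Seq → ℝ) → Seq → ℝ
  | 0 => fun f => f
  | n + 1 => fun f => Lr θ W A φ (θ^[n] ω) (Lrn θ W A φ ω n f)

/-- The dual Ruelle operator `ℒ^*_ω` on Borel measures, satisfying
`∫ f d(ℒ^*_ω μ) = ∫ ℒ_ω(f) dμ`. -/
noncomputable def dualLr (θ : Ω → Ω) (W : Ω → Set ℕ) (A : Ω → ℕ → ℕ → Prop) (φ : Ω → Seq → ℝ)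
    (ω : Ω) (μ : Measure Seq) : Measure Seq :=
  Measure.sum fun a : ℕ =>
    (μ.withDensity fun x =>
      ENNReal.ofReal ((Xfib θ W A ω).indicator (fun y => Real.exp (φ ω y)) (cons a x))).map
      (cons a)

/-- The iterated dual operator `(ℒ^n_ω)^* = ℒ^*_ω ∘ ⋯ ∘ ℒ^*_{θ^{n-1}ω}`. -/
noncomputable def dualLrn (θ : Ω → Ω) (W : Ω → Set ℕ) (A : Ω → ℕ → ℕ → Prop)
    (φ : Ω → Seq → ℝ) : ℕ → Ω → Measure Seq → Measure Seq
  | 0, _, μ => μ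
  | n + 1, ω, μ => dualLr θ W A φ ω (dualLrn θ W A φ n (θ ω) μ)

/-- The Lipschitz constant of `f` on `S` with respect to the distance function `d`. -/
noncomputable def LipC (S : Set Seq) (d : Seq → Seq → ℝ) (f : Seq → ℝ) : ℝ :=
  sInf {K : ℝ | 0 ≤ K ∧ ∀ x ∈ S, ∀ y ∈ S, |f x - f y| ≤ K * d x y}

/-- The sup norm of `f` on `S`. -/
noncomputable def supNormOn (S : Set Seq) (f : Seq → ℝ) : ℝ :=
  sSup {t : ℝ | ∃ x ∈ S, t = |f x|}

/-- The Lipschitz norm `‖f‖_L = D(f) + ‖f‖_∞` on `S` w.r.t. the distance `d`. -/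
noncomputable def LipNorm (S : Set Seq) (d : Seq → Seq → ℝ) (f : Seq → ℝ) : ℝ :=
  LipC S d f + supNormOn S f

/-- The Vasershtein distance of two Borel measures w.r.t. the cost function `d`. -/
noncomputable def Wass (d : Seq → Seq → ℝ) (μ ν : Measure Seq) : ℝ :=
  sInf {t : ℝ | ∃ m : Measure (Seq × Seq),
    m.map Prod.fst = μ ∧ m.map Prod.snd = ν ∧ t = ∫ p, d p.1 p.2 ∂m}

/-- The Birkhoff sum `S_n φ_ω = Σ_{i=0}^{n-1} φ_{θ^i ω} ∘ T^i_ω`. -/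
noncomputable def birkhoffR (θ : Ω → Ω) (φ : Ω → Seq → ℝ) (ω : Ω) (n : ℕ) (x : Seq) : ℝ :=
  ∑ i ∈ Finset.range n, φ (θ^[i] ω) (shift^[i] x)

/-- `w` is an `ω`-admissible word of length `len`. -/
def AdmR (θ : Ω → Ω) (W : Ω → Set ℕ) (A : Ω → ℕ → ℕ → Prop) (ω : Ω) (w : ℕ → ℕ)
    (len : ℕ) : Prop :=
  (∀ i < len, w i ∈ W (θ^[i] ω)) ∧ ∀ i, i + 1 < len → A (θ^[i] ω) (w i) (w (i + 1))

/-- `B_ω = exp Σ_{k=1}^∞ κ(θ^{−k} ω) r^k`. -/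
noncomputable def Brand (θinv : Ω → Ω) (κ : Ω → ℝ) (r : ℝ) (ω : Ω) : ℝ :=
  Real.exp (∑' k : ℕ, κ (θinv^[k + 1] ω) * r ^ (k + 1))

/-- `α_ω := B_ω/β`. -/
noncomputable def alphaR (θinv : Ω → Ω) (κ : Ω → ℝ) (r β : ℝ) (ω : Ω) : ℝ :=
  Brand θinv κ r ω / β

/-- The metric `d̄_ω(x,y) := min{1, α_ω d_r(x,y)}`. -/
noncomputable def dbarR (θinv : Ω → Ω) (κ : Ω → ℝ) (r β : ℝ) (ω : Ω) (x y : Seq) : ℝ :=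
  min 1 (alphaR θinv κ r β ω * dr r x y)

/-- `t_ω := max{β, 1 − (1 − r^{n_ω} α_ω) C_{θ^{n_ω}ω}/B_{θ^{n_ω}ω}}`. -/
noncomputable def tR (θ θinv : Ω → Ω) (κ : Ω → ℝ) (r β : ℝ) (nseq : Ω → ℕ) (C : Ω → ℝ)
    (ω : Ω) : ℝ :=
  max β (1 - (1 - r ^ nseq ω * alphaR θinv κ r β ω) * C (θ^[nseq ω] ω) /
    Brand θinv κ r (θ^[nseq ω] ω))

/-- `Λ_k(ω) = Π_{i=0}^{k-1} λ_{θ^i ω}`. -/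
noncomputable def LamProd (θ : Ω → Ω) (lam : Ω → ℝ) (ω : Ω) (k : ℕ) : ℝ :=
  ∏ i ∈ Finset.range k, lam (θ^[i] ω)

variable [MeasurableSpace Ω]

/-- The big images and big preimages (b.i.p.) property of a random topological
Markov chain, together with fibrewise topological mixing. -/
structure BIPData (θ θinv : Ω → Ω) (W : Ω → Set ℕ) (A : Ω → ℕ → ℕ → Prop)
    (P : Measure Ω) where
  /-- the big images set `Ω_bi` -/
  Ωbi : Set Ω
  /-- the big preimages set `Ω_bp` -/
  Ωbp : Set Ω
  /-- the finite set `ℐ ⊆ ℕ` -/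
  I : Finset ℕ
  measΩbi : MeasurableSet Ωbi
  measΩbp : MeasurableSet Ωbp
  posΩbi : 0 < P Ωbi
  posΩbp : 0 < P Ωbp
  /-- big images: for `ω ∈ Ω_bi` and `a ∈ 𝒲¹_{θ^{-1}ω}` there is `b ∈ ℐ` with
  `ab ∈ 𝒲²_{θ^{-1}ω}` -/
  bigImages : ∀ᵐ ω ∂P, ω ∈ Ωbi → ∀ a ∈ W (θinv ω),
    ∃ b ∈ I, (b : ℕ) ∈ W ω ∧ A (θinv ω) a b
  /-- big preimages: for `ω ∈ Ω_bp` and `a ∈ 𝒲¹_ω` there is `b ∈ ℐ` with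
  `ba ∈ 𝒲²_{θ^{-1}ω}` -/
  bigPreimages : ∀ᵐ ω ∂P, ω ∈ Ωbp → ∀ a ∈ W ω,
    ∃ b ∈ I, (b : ℕ) ∈ W (θinv ω) ∧ A (θinv ω) b a
  /-- fibrewise topological mixing, with random mixing times `N_{ab}` -/
  mixing : ∀ a b : ℕ, ∃ N : Ω → ℕ, Measurable N ∧ ∀ᵐ ω ∂P, ∀ n, N ω ≤ n →
    a ∈ W ω → b ∈ W (θ^[n] ω) → ∃ x ∈ Xfib θ W A ω, x 0 = a ∧ x n = b

/-- The potential `φ` is fibrewise locally Hölder continuous with index 2,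
parameter `r` and Hölder constants `κ(ω)`: `V^ω_n(φ) ≤ κ(ω) r^n` for `n ≥ 2`. -/
def LocHolder2 (θ : Ω → Ω) (W : Ω → Set ℕ) (A : Ω → ℕ → ℕ → Prop) (P : Measure Ω)
    (φ : Ω → Seq → ℝ) (r : ℝ) (κ : Ω → ℝ) : Prop :=
  ∀ᵐ ω ∂P, ∀ n, 2 ≤ n → ∀ x ∈ Xfib θ W A ω, ∀ y ∈ Xfib θ W A ω, agrees x y n →
    |φ ω x - φ ω y| ≤ κ ω * r ^ n

/-- `V^ω_1(φ) < ∞` for a.e. `ω` with `θω ∈ S`. -/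
def Var1Fin (θ : Ω → Ω) (W : Ω → Set ℕ) (A : Ω → ℕ → ℕ → Prop) (P : Measure Ω)
    (φ : Ω → Seq → ℝ) (S : Set Ω) : Prop :=
  ∀ᵐ ω ∂P, θ ω ∈ S → ∃ M : ℝ, ∀ x ∈ Xfib θ W A ω, ∀ y ∈ Xfib θ W A ω, agrees x y 1 →
    |φ ω x - φ ω y| ≤ M

/-- A random probability measure `{μ_ω}`. -/
def IsRandomProbMeasure (θ : Ω → Ω) (W : Ω → Set ℕ) (A : Ω → ℕ → ℕ → Prop)
    (P : Measure Ω) (μ : Ω → Measure Seq) : Prop :=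
  (∀ B : Set Seq, MeasurableSet B → Measurable fun ω => μ ω B) ∧
    ∀ᵐ ω ∂P, IsProbabilityMeasure (μ ω) ∧ μ ω (Xfib θ W A ω) = 1

/-- `f = {f_ω}` is fibrewise Lipschitz continuous (w.r.t. `d_r`) and bounded. -/
def FibLip (θ : Ω → Ω) (W : Ω → Set ℕ) (A : Ω → ℕ → ℕ → Prop) (P : Measure Ω) (r : ℝ)
    (f : Ω → Seq → ℝ) : Prop :=
  ∀ᵐ ω ∂P, (∃ K, 0 ≤ K ∧ ∀ x ∈ Xfib θ W A ω, ∀ y ∈ Xfib θ W A ω,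
      |f ω x - f ω y| ≤ K * dr r x y) ∧ ∃ M, ∀ x ∈ Xfib θ W A ω, |f ω x| ≤ M

/-- `f = {f_ω}` is fibrewise Hölder continuous with parameter `r`. -/
def FibHolder (θ : Ω → Ω) (W : Ω → Set ℕ) (A : Ω → ℕ → ℕ → Prop) (P : Measure Ω) (r : ℝ)
    (f : Ω → Seq → ℝ) : Prop :=
  ∀ᵐ ω ∂P, ∃ κf M : ℝ, (∀ k, 1 ≤ k → ∀ x ∈ Xfib θ W A ω, ∀ y ∈ Xfib θ W A ω,
      agrees x y k → |f ω x - f ω y| ≤ κf * r ^ k) ∧ ∀ x ∈ Xfib θ W A ω, |f ω x| ≤ M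

/-!
After normalising the potential so that `ℒ*_ω μ_{θω} = μ_ω`, invariance of `h_ω dμ_ω dP` is the
equation `ℒ_ω h_ω = h_{θω}` integrated against `μ_{θω}`.

For ergodicity, let `t` be an invariant set with fibres `t_ω = T_ω⁻ⁿ t_{θⁿω}`. Conformality gives
a Gibbs inequality: up to a factor `exp (2 c_n(ω))`, the density of `t_ω` in a cylinder
`[x_0 … x_n]` is the density of `t_{θⁿω}` in `[x_n]`. The distortion `c_n` involves only variations
of index at least `2`, and its integral is bounded uniformly in `n`, so almost every orbit has
infinitely many times `n` at which both `c_n(ω)` is bounded and `θⁿω` lies in a prescribed set of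
positive measure. If `t` is not null, mixing shows that it charges every one-symbol cylinder, and
one further step with big images (where `V_1 < ∞` is used) bounds its density in all of them from
below, uniformly over a set of positive measure. Hence the density of `t_ω` in the cylinders around
`μ_ω`-a.e. point does not tend to `0`, and `t_ω` is conull by Lévy's zero–one law.
-/

section LevyDensity

variable {E : ℕ → Type*} [∀ n, MeasurableSpace (E n)] {μ : Measure (∀ n, E n)}

lemma iSup_piLE_nat :
    ⨆ n, (Filtration.piLE (X := E)) n = MeasurableSpace.pi := by
  refine le_antisymm (iSup_le Filtration.piLE.le) (iSup_le fun n => ?_)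
  refine le_trans ?_ (le_iSup (Filtration.piLE (X := E)) n)
  rw [← measurable_iff_comap_le]
  exact (measurable_pi_apply (X := fun i : Set.Iic n => E i) ⟨n, Set.mem_Iic.2 le_rfl⟩).comp
    (comap_measurable _)

variable [∀ n, MeasurableSingletonClass (E n)]

lemma measurableSet_cylinder_piLE (x : ∀ n, E n) (n : ℕ) :
    MeasurableSet[Filtration.piLE (X := E) n] (PiNat.cylinder x (n + 1)) := by
  refine ⟨{y | ∀ i, y i = x i}, ?_, ?_⟩
  · simp only [Set.ofPred_forall]
    exact .iInter fun i => measurable_pi_apply i (measurableSet_singleton _)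
  · ext y
    simp [PiNat.mem_cylinder_iff]

lemma condExp_piLE_indicator_mul_measureReal_cylinder [IsFiniteMeasure μ] {s : Set (∀ n, E n)}
    (hs : MeasurableSet s) (x : ∀ n, E n) (n : ℕ) :
    (μ[s.indicator (fun _ => (1 : ℝ)) | Filtration.piLE n]) x * μ.real (PiNat.cylinder x (n + 1)) =
      μ.real (PiNat.cylinder x (n + 1) ∩ s) := by
  set f := μ[s.indicator (fun _ => (1 : ℝ)) | Filtration.piLE n]
  have hcyl := measurableSet_cylinder_piLE x n
  have hconst : ∀ y ∈ PiNat.cylinder x (n + 1), f y = f x := fun y hy =>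
    stronglyMeasurable_condExp.dependsOn_of_piLE fun i hi => hy i (Nat.lt_succ_of_le hi)
  calc f x * μ.real (PiNat.cylinder x (n + 1))
      = ∫ y in PiNat.cylinder x (n + 1), f y ∂μ := by
        rw [setIntegral_congr_fun (Filtration.piLE.le n _ hcyl) hconst, setIntegral_const,
          smul_eq_mul, mul_comm]
    _ = ∫ y in PiNat.cylinder x (n + 1), s.indicator (fun _ => (1 : ℝ)) y ∂μ :=
        setIntegral_condExp _ ((integrable_const 1).indicator hs) hcyl
    _ = μ.real (PiNat.cylinder x (n + 1) ∩ s) := by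
        rw [setIntegral_indicator hs, setIntegral_const, smul_eq_mul, mul_one]

end LevyDensity

lemma measure_compl_eq_zero_of_frequently_cylinder {E : ℕ → Type*}
    [∀ n, TopologicalSpace (E n)] [∀ n, DiscreteTopology (E n)] [∀ n, Countable (E n)]
    [∀ n, MeasurableSpace (E n)] [∀ n, BorelSpace (E n)] {μ : Measure (∀ n, E n)}
    [IsFiniteMeasure μ] {s : Set (∀ n, E n)} (hs : MeasurableSet s) {D : ℝ}
    (hD : ∀ᵐ x ∂μ, ∃ᶠ n in atTop,
      μ.real (PiNat.cylinder x (n + 1)) ≤ D * μ.real (PiNat.cylinder x (n + 1) ∩ s)) :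
    μ sᶜ = 0 := by
  have hlevy : ∀ᵐ x ∂μ, Tendsto
      (fun n => (μ[s.indicator (fun _ => (1 : ℝ)) | Filtration.piLE n]) x) atTop
      (nhds (s.indicator (fun _ => 1) x)) := by
    refine ((integrable_const 1).indicator hs).tendsto_ae_condExp ?_
    rw [iSup_piLE_nat]
    exact stronglyMeasurable_const.indicator hs
  refine measure_mono_null (fun x hx => ?_)
    (ae_iff.1 ((hlevy.and hD).and (Measure.support_mem_ae (μ := μ))))
  rintro ⟨⟨hlim, hfreq⟩, hsupp⟩
  have hpos (n : ℕ) : 0 < μ.real (PiNat.cylinder x (n + 1)) :=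
    ENNReal.toReal_pos (Measure.mem_support_iff_forall x |>.1 hsupp _
      ((PiNat.isOpen_cylinder E x _).mem_nhds (PiNat.self_mem_cylinder x _))).ne'
      (measure_ne_top _ _)
  have hfreq' : ∃ᶠ n in atTop,
      1 ≤ D * (μ[s.indicator (fun _ => (1 : ℝ)) | Filtration.piLE n]) x := by
    refine hfreq.mono fun n hn => ?_
    rw [← condExp_piLE_indicator_mul_measureReal_cylinder hs, ← mul_assoc] at hn
    exact (le_mul_iff_one_le_left (hpos n)).1 hn
  have hle : 1 ≤ D * s.indicator (fun _ => (1 : ℝ)) x :=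
    ge_of_tendsto_of_frequently (hlim.const_mul D) hfreq'
  rw [Set.indicator_of_notMem hx, mul_zero] at hle
  exact zero_lt_one.not_ge hle

section Recurrence

variable {α : Type*} [MeasurableSpace α] {μ : Measure α}

lemma nullMeasurableSet_setOf_frequently {s : ℕ → Set α} (hs : ∀ n, NullMeasurableSet (s n) μ) :
    NullMeasurableSet {x | ∃ᶠ n in atTop, x ∈ s n} μ := by
  simp only [frequently_atTop, Set.ofPred_forall, Set.ofPred_exists, Set.ofPred_and]
  exact .iInter fun n => .iUnion fun k => (NullMeasurableSet.const _).inter (hs k)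

variable [IsFiniteMeasure μ]

lemma le_measure_setOf_frequently {s : ℕ → Set α} (hs : ∀ n, NullMeasurableSet (s n) μ)
    {ε : ENNReal} (hε : ∀ n, ε ≤ μ (s n)) : ε ≤ μ {x | ∃ᶠ n in atTop, x ∈ s n} := by
  have hlim : {x | ∃ᶠ n in atTop, x ∈ s n} = ⋂ n, ⋃ k ≥ n, s k := by
    ext x
    simp only [Set.mem_ofPred_eq, frequently_atTop, Set.mem_iInter, Set.mem_iUnion, exists_prop]
  rw [hlim]
  refine ge_of_tendsto' (tendsto_measure_iInter_atTop
    (fun n => .iUnion fun k => .iUnion fun _ => hs k) ?_ ⟨0, measure_ne_top _ _⟩) fun n =>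
      (hε n).trans (measure_mono (Set.subset_biUnion_of_mem (u := s) (Set.mem_Ici.2 le_rfl)))
  exact fun m n hmn => Set.biUnion_subset_biUnion_left fun k hk => hmn.trans hk

lemma exists_pos_forall_le_measureReal_inter_le {s : ℕ → Set α} {ε : ℝ} (hε : 0 < ε)
    (hs : ∀ n, ε ≤ μ.real (s n)) {u : ℕ → α → ℝ} (hu : ∀ n, Integrable (u n) μ)
    (hu0 : ∀ n x, 0 ≤ u n x) {K : ℝ} (hK : ∀ n, ∫ x, u n x ∂μ ≤ K) :
    ∃ N δ, 0 < δ ∧ ∀ n, δ ≤ μ.real (s n ∩ {x | u n x ≤ N}) := by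
  have hK0 : 0 ≤ K := (integral_nonneg (hu0 0)).trans (hK 0)
  have hN : 0 < (K + 1) / ε := by positivity
  refine ⟨(K + 1) / ε, ε - K / ((K + 1) / ε), ?_, fun n => ?_⟩
  · rw [sub_pos, div_lt_iff₀ hN, mul_div_cancel₀ _ hε.ne']
    exact lt_add_one K
  have htail : μ.real {x | (K + 1) / ε ≤ u n x} ≤ K / ((K + 1) / ε) := by
    rw [le_div_iff₀' hN]
    exact (mul_meas_ge_le_integral_of_nonneg (ae_of_all _ (hu0 n)) (hu n) _).trans (hK n)
  have hcover : s n ⊆ s n ∩ {x | u n x ≤ (K + 1) / ε} ∪ {x | (K + 1) / ε ≤ u n x} := fun x hx =>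
    (le_total (u n x) ((K + 1) / ε)).imp (fun h => ⟨hx, h⟩) id
  linarith [hs n, measureReal_mono (μ := μ) hcover (measure_ne_top _ _),
    measureReal_union_le (μ := μ) (s n ∩ {x | u n x ≤ (K + 1) / ε}) {x | (K + 1) / ε ≤ u n x}]

lemma exists_ae_frequently_mem_and_le {T : α → α} (hT : Ergodic T μ) {E : Set α}
    (hE : NullMeasurableSet E μ) (hE0 : μ E ≠ 0) {u : ℕ → α → ℝ}
    (hu : ∀ n, Integrable (u n) μ) (hu0 : ∀ n x, 0 ≤ u n x) {K : ℝ}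
    (hK : ∀ n, ∫ x, u n x ∂μ ≤ K) (hstep : ∀ n x, u n (T x) ≤ u (n + 1) x) :
    ∃ N, ∀ᵐ x ∂μ, ∃ᶠ n in atTop, T^[n] x ∈ E ∧ u n x ≤ N := by
  have hEn (n : ℕ) : μ (T^[n] ⁻¹' E) = μ E :=
    (hT.toMeasurePreserving.iterate n).measure_preimage hE
  obtain ⟨N, δ, hδ, hδle⟩ := exists_pos_forall_le_measureReal_inter_le (s := fun n => T^[n] ⁻¹' E)
    (ENNReal.toReal_pos hE0 (measure_ne_top _ _))
    (fun n => (congrArg ENNReal.toReal (hEn n)).ge) hu hu0 hK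
  have hmeas (n : ℕ) : NullMeasurableSet (T^[n] ⁻¹' E ∩ {x | u n x ≤ N}) μ :=
    (hE.preimage (hT.quasiMeasurePreserving.iterate n)).inter
      (nullMeasurableSet_le (hu n).aemeasurable aemeasurable_const)
  set G := {x | ∃ᶠ n in atTop, x ∈ T^[n] ⁻¹' E ∩ {x | u n x ≤ N}} with hG
  have hGT : G ⊆ T ⁻¹' G := by
    intro x hx
    rw [hG, Set.mem_ofPred_eq, ← map_add_atTop_eq_nat 1, frequently_map] at hx
    exact hx.mono fun n hn => ⟨hn.1, (hstep n x).trans hn.2⟩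
  have hG0 : μ G ≠ 0 := (lt_of_lt_of_le (ENNReal.ofReal_pos.2 hδ) (le_measure_setOf_frequently hmeas
    fun n => ENNReal.ofReal_le_of_le_toReal (hδle n))).ne'
  refine ⟨N, ?_⟩
  rcases hT.ae_empty_or_univ_of_ae_le_preimage (nullMeasurableSet_setOf_frequently hmeas)
    hGT.eventuallyLE with h | h
  · exact absurd (ae_eq_empty.1 h) hG0
  · exact eventuallyEq_univ.1 h

lemma ae_frequently_mem {T : α → α} (hT : Ergodic T μ) {E : Set α}
    (hE : NullMeasurableSet E μ) (hE0 : μ E ≠ 0) :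
    ∀ᵐ x ∂μ, ∃ᶠ n in atTop, T^[n] x ∈ E := by
  obtain ⟨N, hN⟩ := exists_ae_frequently_mem_and_le hT hE hE0 (u := fun _ _ => 0) (K := 0)
    (fun _ => integrable_zero _ _ _) (fun _ _ => le_rfl) (fun _ => integral_zero _ _ |>.le)
    (fun _ _ => le_rfl)
  exact hN.mono fun x hx => hx.mono fun n hn => hn.1

end Recurrence

section Sequences

lemma measurable_shift : Measurable shift :=
  measurable_pi_lambda _ fun i => measurable_pi_apply (i + 1)

lemma measurable_cons (a : ℕ) : Measurable (cons a) :=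
  measurable_pi_lambda _ fun i => by
    cases i with
    | zero => exact measurable_const
    | succ i => exact measurable_pi_apply i

/-- The cylinder `[a]` of all sequences whose first symbol is `a`. -/
def firstCyl (a : ℕ) : Set Seq := {y | y 0 = a}

lemma measurableSet_firstCyl (a : ℕ) : MeasurableSet (firstCyl a) :=
  (measurable_pi_apply 0 : Measurable fun y : Seq => y 0) (measurableSet_singleton a)

lemma cylinder_one (x : Seq) : PiNat.cylinder x 1 = firstCyl (x 0) := by
  ext y
  simp [PiNat.mem_cylinder_iff, firstCyl]

lemma cylinder_succ (x : Seq) (n : ℕ) :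
    PiNat.cylinder x (n + 1) = firstCyl (x 0) ∩ shift ⁻¹' PiNat.cylinder (shift x) n := by
  ext y
  constructor
  · exact fun hy => ⟨hy 0 n.succ_pos, fun i hi => hy (i + 1) (Nat.succ_lt_succ hi)⟩
  · rintro ⟨h0, hs⟩ (_ | i) hi
    · exact h0
    · exact hs i (Nat.lt_of_succ_lt_succ hi)

lemma agrees_cons_of_mem_cylinder {x y : Seq} {n : ℕ} (hy : y ∈ PiNat.cylinder (shift x) n) :
    agrees (cons (x 0) y) x (n + 1)
  | 0, _ => rfl
  | i + 1, hi => hy i (Nat.lt_of_succ_lt_succ hi)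

lemma measurableSet_cylinder (x : Seq) (n : ℕ) : MeasurableSet (PiNat.cylinder x n) :=
  (PiNat.isOpen_cylinder (fun _ : ℕ => ℕ) x n).measurableSet

end Sequences

section Fibres

variable {Ω : Type*} {θ : Ω → Ω} {W : Ω → Set ℕ} {A : Ω → ℕ → ℕ → Prop} {φ : Ω → Seq → ℝ} {ω : Ω}

lemma measurableSet_Xfib : MeasurableSet (Xfib θ W A ω) := by
  simp only [Xfib, Set.ofPred_and, Set.ofPred_forall]
  refine (MeasurableSet.iInter fun i => ?_).inter (MeasurableSet.iInter fun i => ?_)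
  · exact measurable_pi_apply i (MeasurableSet.of_discrete (s := W (θ^[i] ω)))
  · have hpair : Measurable fun x : Seq => (x i, x (i + 1)) := by fun_prop
    exact hpair (MeasurableSet.of_discrete (s := {p : ℕ × ℕ | A (θ^[i] ω) p.1 p.2}))

lemma shift_mem_Xfib {x : Seq} (hx : x ∈ Xfib θ W A ω) : shift x ∈ Xfib θ W A (θ ω) :=
  ⟨fun i => hx.1 (i + 1), fun i => hx.2 (i + 1)⟩

lemma cons_mem_Xfib {a : ℕ} {y : Seq} (ha : a ∈ W ω) (hay : A ω a (y 0))
    (hy : y ∈ Xfib θ W A (θ ω)) : cons a y ∈ Xfib θ W A ω := by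
  refine ⟨?_, ?_⟩ <;> rintro (_ | i)
  · exact ha
  · exact hy.1 i
  · exact hay
  · exact hy.2 i

lemma birkhoffR_succ (n : ℕ) (x : Seq) :
    birkhoffR θ φ ω (n + 1) x = φ ω x + birkhoffR θ φ (θ ω) n (shift x) := by
  rw [birkhoffR, Finset.sum_range_succ', add_comm]
  rfl

lemma dualLr_apply_inter_preimage (ν : Measure Seq) (a : ℕ) {D : Set Seq}
    (hD : MeasurableSet D) :
    dualLr θ W A φ ω ν (firstCyl a ∩ shift ⁻¹' D) =
      ∫⁻ y in D, ENNReal.ofReal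
        ((Xfib θ W A ω).indicator (fun z => Real.exp (φ ω z)) (cons a y)) ∂ν := by
  have hmeas : MeasurableSet (firstCyl a ∩ shift ⁻¹' D) :=
    (measurableSet_firstCyl a).inter (measurable_shift hD)
  have hpre (b : ℕ) : cons b ⁻¹' (firstCyl a ∩ shift ⁻¹' D) = if b = a then D else ∅ := by
    split_ifs with hb
    · exact Set.inter_eq_right.2 fun _ _ => hb
    · exact Set.eq_empty_of_forall_notMem fun y hy => hb hy.1
  rw [dualLr, Measure.sum_apply _ hmeas, tsum_eq_single a fun b hb => ?_]
  · rw [Measure.map_apply (measurable_cons a) hmeas, hpre, if_pos rfl, withDensity_apply _ hD]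
  · rw [Measure.map_apply (measurable_cons b) hmeas, hpre, if_neg hb, measure_empty]

/-- `μ` is conformal at `ω` for a normalised potential: `ℒ*_ω μ_{θω} = μ_ω`, and `μ_ω` is carried
by `X_ω`. -/
structure IsConformalAt (θ : Ω → Ω) (W : Ω → Set ℕ) (A : Ω → ℕ → ℕ → Prop) (φ : Ω → Seq → ℝ)
    (μ : Ω → Measure Seq) (ω : Ω) : Prop where
  dualLr_eq : dualLr θ W A φ ω (μ (θ ω)) = μ ω
  ae_mem : ∀ᵐ x ∂μ ω, x ∈ Xfib θ W A ω

/-- The condition that `LocHolder2` imposes on the fibre over `ω`. -/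
def IsLocHolder2At (θ : Ω → Ω) (W : Ω → Set ℕ) (A : Ω → ℕ → ℕ → Prop) (φ : Ω → Seq → ℝ) (r : ℝ)
    (κ : Ω → ℝ) (ω : Ω) : Prop :=
  ∀ n, 2 ≤ n → ∀ x ∈ Xfib θ W A ω, ∀ y ∈ Xfib θ W A ω, agrees x y n →
    |φ ω x - φ ω y| ≤ κ ω * r ^ n

variable {μ : Ω → Measure Seq}

lemma IsConformalAt.measure_inter_preimage_le (hμ : IsConformalAt θ W A φ μ ω) {a : ℕ}
    {D : Set Seq} (hD : MeasurableSet D) {c : ℝ}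
    (hc : ∀ y ∈ D, cons a y ∈ Xfib θ W A ω → φ ω (cons a y) ≤ c) :
    μ ω (firstCyl a ∩ shift ⁻¹' D) ≤ ENNReal.ofReal (Real.exp c) * μ (θ ω) D := by
  rw [← hμ.dualLr_eq, dualLr_apply_inter_preimage _ _ hD, ← setLIntegral_const]
  refine setLIntegral_mono measurable_const fun y hy => ENNReal.ofReal_le_ofReal ?_
  by_cases hX : cons a y ∈ Xfib θ W A ω
  · rw [Set.indicator_of_mem hX]
    exact Real.exp_le_exp.2 (hc y hy hX)
  · rw [Set.indicator_of_notMem hX]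
    exact (Real.exp_pos c).le

lemma IsConformalAt.le_measure_inter_preimage (hμ : IsConformalAt θ W A φ μ ω)
    (hμ' : IsConformalAt θ W A φ μ (θ ω)) {a : ℕ} {D : Set Seq} (hD : MeasurableSet D) {c : ℝ}
    (hc : ∀ y ∈ D, y ∈ Xfib θ W A (θ ω) → cons a y ∈ Xfib θ W A ω ∧ c ≤ φ ω (cons a y)) :
    ENNReal.ofReal (Real.exp c) * μ (θ ω) D ≤ μ ω (firstCyl a ∩ shift ⁻¹' D) := by
  conv_rhs => rw [← hμ.dualLr_eq, dualLr_apply_inter_preimage _ _ hD]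
  rw [← setLIntegral_const]
  refine lintegral_mono_ae ((ae_restrict_iff' hD).2 ?_)
  filter_upwards [hμ'.ae_mem] with y hyX hyD
  obtain ⟨hX, hle⟩ := hc y hyD hyX
  rw [Set.indicator_of_mem hX]
  exact ENNReal.ofReal_le_ofReal (Real.exp_le_exp.2 hle)

/-- The bound `κ_ω r^(n+1) + ⋯ + κ_{θ^(n-1)ω} r^2` on the oscillation of the `n`-th Birkhoff sum
over cylinders of length `n + 1`. -/
noncomputable def distortion (θ : Ω → Ω) (κ : Ω → ℝ) (r : ℝ) : ℕ → Ω → ℝ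
  | 0, _ => 0
  | n + 1, ω => |κ ω| * r ^ (n + 2) + distortion θ κ r n (θ ω)

variable {r : ℝ} {κ : Ω → ℝ}

lemma distortion_nonneg (hr : 0 ≤ r) (n : ℕ) (ω : Ω) : 0 ≤ distortion θ κ r n ω := by
  induction n generalizing ω with
  | zero => exact le_rfl
  | succ n ih => exact add_nonneg (by positivity) (ih (θ ω))

lemma IsLocHolder2At.abs_sub_le (hφ : IsLocHolder2At θ W A φ r κ ω) (hr : 0 ≤ r) {x y : Seq}
    (hx : x ∈ Xfib θ W A ω) {n : ℕ} (hy : y ∈ PiNat.cylinder (shift x) (n + 1))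
    (hyX : cons (x 0) y ∈ Xfib θ W A ω) :
    |φ ω (cons (x 0) y) - φ ω x| ≤ |κ ω| * r ^ (n + 2) :=
  (hφ (n + 2) (by omega) _ hyX _ hx (agrees_cons_of_mem_cylinder hy)).trans
    (mul_le_mul_of_nonneg_right (le_abs_self _) (by positivity))

lemma measure_cylinder_inter_preimage_le (hr : 0 ≤ r)
    (hμ : ∀ n, IsConformalAt θ W A φ μ (θ^[n] ω))
    (hφ : ∀ n, IsLocHolder2At θ W A φ r κ (θ^[n] ω)) {x : Seq} (hx : x ∈ Xfib θ W A ω) (n : ℕ)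
    {B : Set Seq} (hB : MeasurableSet B) :
    μ ω (PiNat.cylinder x (n + 1) ∩ shift^[n] ⁻¹' B) ≤
      ENNReal.ofReal (Real.exp (birkhoffR θ φ ω n x + distortion θ κ r n ω)) *
        μ (θ^[n] ω) (firstCyl (x n) ∩ B) := by
  induction n generalizing ω x with
  | zero => simp [cylinder_one, birkhoffR, distortion]
  | succ n ih =>
    have hφω : IsLocHolder2At θ W A φ r κ ω := hφ 0
    have hμω : IsConformalAt θ W A φ μ ω := hμ 0
    have hstep := hμω.measure_inter_preimage_le (a := x 0)
      (D := PiNat.cylinder (shift x) (n + 1) ∩ shift^[n] ⁻¹' B) (c := φ ω x + |κ ω| * r ^ (n + 2))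
      ((measurableSet_cylinder _ _).inter (measurable_shift.iterate n hB))
      fun y hy hyX => by linarith [le_of_abs_le (hφω.abs_sub_le hr hx hy.1 hyX)]
    have ih' := ih (fun n => hμ (n + 1)) (fun n => hφ (n + 1)) (shift_mem_Xfib hx)
    calc μ ω (PiNat.cylinder x (n + 2) ∩ shift^[n + 1] ⁻¹' B)
        = μ ω (firstCyl (x 0) ∩
            shift ⁻¹' (PiNat.cylinder (shift x) (n + 1) ∩ shift^[n] ⁻¹' B)) := by
          rw [cylinder_succ x, Set.inter_assoc, Function.iterate_succ, Set.preimage_comp,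
            Set.preimage_inter]
      _ ≤ _ := hstep.trans (mul_le_mul_right ih' _)
      _ = _ := by
          rw [← mul_assoc, ← ENNReal.ofReal_mul (Real.exp_nonneg _), ← Real.exp_add,
            birkhoffR_succ, distortion, add_add_add_comm]
          rfl

lemma le_measure_cylinder_inter_preimage (hr : 0 ≤ r)
    (hμ : ∀ n, IsConformalAt θ W A φ μ (θ^[n] ω))
    (hφ : ∀ n, IsLocHolder2At θ W A φ r κ (θ^[n] ω)) {x : Seq} (hx : x ∈ Xfib θ W A ω) (n : ℕ)
    {B : Set Seq} (hB : MeasurableSet B) :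
    ENNReal.ofReal (Real.exp (birkhoffR θ φ ω n x - distortion θ κ r n ω)) *
        μ (θ^[n] ω) (firstCyl (x n) ∩ B) ≤
      μ ω (PiNat.cylinder x (n + 1) ∩ shift^[n] ⁻¹' B) := by
  induction n generalizing ω x with
  | zero => simp [cylinder_one, birkhoffR, distortion]
  | succ n ih =>
    have hφω : IsLocHolder2At θ W A φ r κ ω := hφ 0
    have hμω : IsConformalAt θ W A φ μ ω := hμ 0
    have hstep := hμω.le_measure_inter_preimage (hμ 1) (a := x 0)
      (D := PiNat.cylinder (shift x) (n + 1) ∩ shift^[n] ⁻¹' B) (c := φ ω x - |κ ω| * r ^ (n + 2))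
      ((measurableSet_cylinder _ _).inter (measurable_shift.iterate n hB))
      fun y hy hyX => by
        have hyX' : cons (x 0) y ∈ Xfib θ W A ω :=
          cons_mem_Xfib (hx.1 0) (by rw [hy.1 0 n.succ_pos]; exact hx.2 0) hyX
        exact ⟨hyX', by linarith [neg_le_of_abs_le (hφω.abs_sub_le hr hx hy.1 hyX')]⟩
    have ih' := ih (fun n => hμ (n + 1)) (fun n => hφ (n + 1)) (shift_mem_Xfib hx)
    calc _ = ENNReal.ofReal (Real.exp (φ ω x - |κ ω| * r ^ (n + 2))) *
          (ENNReal.ofReal (Real.exp (birkhoffR θ φ (θ ω) n (shift x) - distortion θ κ r n (θ ω))) *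
            μ (θ^[n] (θ ω)) (firstCyl (shift x n) ∩ B)) := by
          rw [← mul_assoc, ← ENNReal.ofReal_mul (Real.exp_nonneg _), ← Real.exp_add,
            birkhoffR_succ, distortion, sub_add_sub_comm]
          rfl
      _ ≤ μ ω (firstCyl (x 0) ∩
            shift ⁻¹' (PiNat.cylinder (shift x) (n + 1) ∩ shift^[n] ⁻¹' B)) :=
          (mul_le_mul_right ih' _).trans hstep
      _ = μ ω (PiNat.cylinder x (n + 2) ∩ shift^[n + 1] ⁻¹' B) := by
          rw [cylinder_succ x, Set.inter_assoc, Function.iterate_succ, Set.preimage_comp,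
            Set.preimage_inter]

end Fibres

section Distortion

variable {Ω : Type*} [MeasurableSpace Ω] {P : Measure Ω} {θ : Ω → Ω} {κ : Ω → ℝ} {r : ℝ}

lemma integrable_distortion (hθ : MeasurePreserving θ P P) (hκ : Integrable κ P) (n : ℕ) :
    Integrable (distortion θ κ r n) P := by
  induction n with
  | zero => exact integrable_zero _ _ _
  | succ n ih => exact (hκ.abs.mul_const _).add (hθ.integrable_comp_of_integrable ih)

lemma integral_distortion (hθ : MeasurePreserving θ P P) (hκ : Integrable κ P) (n : ℕ) :
    ∫ ω, distortion θ κ r n ω ∂P = (∫ ω, |κ ω| ∂P) * ∑ k ∈ Finset.range n, r ^ (k + 2) := by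
  induction n with
  | zero => simp [distortion]
  | succ n ih =>
    have hcomp : ∫ ω, distortion θ κ r n (θ ω) ∂P = ∫ ω, distortion θ κ r n ω ∂P := by
      rw [← integral_map hθ.aemeasurable, hθ.map_eq]
      rw [hθ.map_eq]
      exact (integrable_distortion hθ hκ n).aestronglyMeasurable
    rw [Finset.sum_range_succ, mul_add, ← ih, ← hcomp, ← integral_mul_const, add_comm (∫ _, _ ∂P)]
    exact integral_add (hκ.abs.mul_const _)
      (hθ.integrable_comp_of_integrable (integrable_distortion hθ hκ n))

lemma integral_distortion_le (hr0 : 0 ≤ r) (hr1 : r < 1) (hθ : MeasurePreserving θ P P)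
    (hκ : Integrable κ P) (n : ℕ) :
    ∫ ω, distortion θ κ r n ω ∂P ≤ (∫ ω, |κ ω| ∂P) * ∑' k : ℕ, r ^ (k + 2) := by
  rw [integral_distortion hθ hκ]
  gcongr
  exact ((summable_nat_add_iff 2).2 (summable_geometric_of_lt_one hr0 hr1)).sum_le_tsum _
    fun k _ => by positivity

end Distortion

section InvariantSets

variable {Ω : Type*} {θ : Ω → Ω} {t : Set (Ω × Seq)}

lemma preimage_shift_preimage_mk (ht : (fun p : Ω × Seq => (θ p.1, shift p.2)) ⁻¹' t = t) (ω : Ω) :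
    shift ⁻¹' (Prod.mk (θ ω) ⁻¹' t) = Prod.mk ω ⁻¹' t := by
  conv_rhs => rw [← ht]
  rfl

lemma preimage_iterate_shift_preimage_mk
    (ht : (fun p : Ω × Seq => (θ p.1, shift p.2)) ⁻¹' t = t) (ω : Ω) (n : ℕ) :
    shift^[n] ⁻¹' (Prod.mk (θ^[n] ω) ⁻¹' t) = Prod.mk ω ⁻¹' t := by
  induction n generalizing ω with
  | zero => rfl
  | succ n ih =>
    rw [Function.iterate_succ, Set.preimage_comp, Function.iterate_succ_apply, ih,
      preimage_shift_preimage_mk ht]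

end InvariantSets

section CylinderEstimates

variable {Ω : Type*} {θ : Ω → Ω} {W : Ω → Set ℕ} {A : Ω → ℕ → ℕ → Prop} {φ : Ω → Seq → ℝ}
  {r : ℝ} {κ : Ω → ℝ} {ω : Ω} {μ : Ω → Measure Seq}

lemma IsConformalAt.exists_mem_Xfib (hμ : IsConformalAt θ W A φ μ ω) {D : Set Seq}
    (hD : μ ω D ≠ 0) : ∃ x ∈ D, x ∈ Xfib θ W A ω :=
  ((frequently_ae_mem_iff.2 hD).and_eventually hμ.ae_mem).exists

lemma IsConformalAt.measure_firstCyl_mul_le (hμ : IsConformalAt θ W A φ μ ω)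
    (hμ' : IsConformalAt θ W A φ μ (θ ω)) {M : ℝ}
    (hM : ∀ x ∈ Xfib θ W A ω, ∀ y ∈ Xfib θ W A ω, agrees x y 1 → |φ ω x - φ ω y| ≤ M)
    {a b : ℕ} (ha : a ∈ W ω) (hab : A ω a b) {D : Set Seq} (hD : MeasurableSet D)
    (hDb : D ⊆ firstCyl b) :
    μ ω (firstCyl a) * μ (θ ω) D ≤
      ENNReal.ofReal (Real.exp (2 * M)) * μ (θ ω) Set.univ *
        μ ω (firstCyl a ∩ shift ⁻¹' D) := by
  rcases eq_or_ne (μ (θ ω) D) 0 with h0 | h0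
  · simp only [h0, mul_zero, zero_le]
  have hcons : ∀ y ∈ D, y ∈ Xfib θ W A (θ ω) → cons a y ∈ Xfib θ W A ω := fun y hy =>
    cons_mem_Xfib ha (by rwa [show y 0 = b from hDb hy])
  obtain ⟨z, hzD, hz⟩ := hμ'.exists_mem_Xfib h0
  have hosc : ∀ y, cons a y ∈ Xfib θ W A ω → |φ ω (cons a y) - φ ω (cons a z)| ≤ M := fun y hy =>
    hM _ hy _ (hcons z hzD hz) fun i hi => by rw [Nat.lt_one_iff.1 hi]; rfl
  have hupper : μ ω (firstCyl a) ≤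
      ENNReal.ofReal (Real.exp (φ ω (cons a z) + M)) * μ (θ ω) Set.univ := by
    simpa only [Set.preimage_univ, Set.inter_univ] using
      hμ.measure_inter_preimage_le .univ (c := φ ω (cons a z) + M) fun y _ hy => by
        linarith [le_of_abs_le (hosc y hy)]
  have hlower := hμ.le_measure_inter_preimage hμ' hD (c := φ ω (cons a z) - M) fun y hy hyX =>
    ⟨hcons y hy hyX, by linarith [neg_le_of_abs_le (hosc y (hcons y hy hyX))]⟩
  calc μ ω (firstCyl a) * μ (θ ω) D
      ≤ ENNReal.ofReal (Real.exp (φ ω (cons a z) + M)) * μ (θ ω) Set.univ * μ (θ ω) D := by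
        gcongr
    _ = ENNReal.ofReal (Real.exp (2 * M)) * μ (θ ω) Set.univ *
          (ENNReal.ofReal (Real.exp (φ ω (cons a z) - M)) * μ (θ ω) D) := by
        rw [show φ ω (cons a z) + M = 2 * M + (φ ω (cons a z) - M) by ring, Real.exp_add,
          ENNReal.ofReal_mul (Real.exp_nonneg _)]
        ring
    _ ≤ _ := by gcongr

lemma exists_nat_forall_measure_firstCyl_le [IsFiniteMeasure (μ (θ ω))]
    (hμ : IsConformalAt θ W A φ μ ω) (hμ' : IsConformalAt θ W A φ μ (θ ω))
    (hVar : ∃ M, ∀ x ∈ Xfib θ W A ω, ∀ y ∈ Xfib θ W A ω, agrees x y 1 → |φ ω x - φ ω y| ≤ M)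
    {I : Finset ℕ} (hI : ∀ a ∈ W ω, ∃ b ∈ I, b ∈ W (θ ω) ∧ A ω a b) {B : Set Seq}
    (hB : MeasurableSet B) (hpos : ∀ b ∈ W (θ ω), μ (θ ω) (firstCyl b ∩ B) ≠ 0) :
    ∃ N : ℕ, ∀ a, μ ω (firstCyl a) ≤ N * μ ω (firstCyl a ∩ shift ⁻¹' B) := by
  classical
  obtain ⟨M, hM⟩ := hVar
  set D := fun b => ENNReal.ofReal (Real.exp (2 * M)) * μ (θ ω) Set.univ /
    μ (θ ω) (firstCyl b ∩ B)
  have hD : ∀ b ∈ I.filter (· ∈ W (θ ω)), D b ≠ ⊤ := fun b hb =>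
    ENNReal.div_ne_top (ENNReal.mul_ne_top ENNReal.ofReal_ne_top (measure_ne_top _ _))
      (hpos b (Finset.mem_filter.1 hb).2)
  obtain ⟨N, hN⟩ := ENNReal.exists_nat_gt (ENNReal.sum_ne_top.2 hD)
  refine ⟨N, fun a => ?_⟩
  rcases eq_or_ne (μ ω (firstCyl a)) 0 with h0 | h0
  · simp only [h0, zero_le]
  obtain ⟨x, hxa, hx⟩ := hμ.exists_mem_Xfib h0
  have ha : a ∈ W ω := (show x 0 = a from hxa) ▸ hx.1 0
  obtain ⟨b, hbI, hbW, hab⟩ := hI a ha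
  have hmul := hμ.measure_firstCyl_mul_le hμ' hM ha hab ((measurableSet_firstCyl b).inter hB)
    Set.inter_subset_left
  calc μ ω (firstCyl a)
      ≤ D b * μ ω (firstCyl a ∩ shift ⁻¹' (firstCyl b ∩ B)) := by
        rw [← ENNReal.mul_div_right_comm]
        exact (ENNReal.le_div_iff_mul_le (.inl (hpos b hbW)) (.inl (measure_ne_top _ _))).2 hmul
    _ ≤ N * μ ω (firstCyl a ∩ shift ⁻¹' B) := by
        gcongr
        · exact (Finset.single_le_sum_of_canonicallyOrdered
            (Finset.mem_filter.2 ⟨hbI, hbW⟩)).trans hN.le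
        · exact Set.inter_subset_right

lemma measure_firstCyl_inter_ne_zero (hr : 0 ≤ r)
    (hμ : ∀ n, IsConformalAt θ W A φ μ (θ^[n] ω))
    (hφ : ∀ n, IsLocHolder2At θ W A φ r κ (θ^[n] ω)) {x : Seq} (hx : x ∈ Xfib θ W A ω) {n : ℕ}
    {B : Set Seq} (hB : MeasurableSet B) (hne : μ (θ^[n] ω) (firstCyl (x n) ∩ B) ≠ 0) :
    μ ω (firstCyl (x 0) ∩ shift^[n] ⁻¹' B) ≠ 0 := by
  have hpos : 0 < μ ω (PiNat.cylinder x (n + 1) ∩ shift^[n] ⁻¹' B) :=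
    (ENNReal.mul_pos (ENNReal.ofReal_pos.2 (Real.exp_pos _)).ne' hne).trans_le
      (le_measure_cylinder_inter_preimage hr hμ hφ hx n hB)
  refine (hpos.trans_le (measure_mono (Set.inter_subset_inter_left _ ?_))).ne'
  exact fun y hy => hy 0 n.succ_pos

lemma measure_cylinder_le_of_measure_firstCyl_le (hr : 0 ≤ r)
    (hμ : ∀ n, IsConformalAt θ W A φ μ (θ^[n] ω))
    (hφ : ∀ n, IsLocHolder2At θ W A φ r κ (θ^[n] ω)) {x : Seq} (hx : x ∈ Xfib θ W A ω) {n : ℕ}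
    {B : Set Seq} (hB : MeasurableSet B) {C : ENNReal}
    (hC : μ (θ^[n] ω) (firstCyl (x n)) ≤ C * μ (θ^[n] ω) (firstCyl (x n) ∩ B)) :
    μ ω (PiNat.cylinder x (n + 1)) ≤
      ENNReal.ofReal (Real.exp (2 * distortion θ κ r n ω)) * C *
        μ ω (PiNat.cylinder x (n + 1) ∩ shift^[n] ⁻¹' B) := by
  have hupper := measure_cylinder_inter_preimage_le hr hμ hφ hx n .univ
  rw [Set.preimage_univ, Set.inter_univ, Set.inter_univ] at hupper
  set S := birkhoffR θ φ ω n x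
  set c := distortion θ κ r n ω
  calc μ ω (PiNat.cylinder x (n + 1))
      ≤ ENNReal.ofReal (Real.exp (S + c)) *
          (C * μ (θ^[n] ω) (firstCyl (x n) ∩ B)) := hupper.trans (by gcongr)
    _ = ENNReal.ofReal (Real.exp (2 * c)) * C *
          (ENNReal.ofReal (Real.exp (S - c)) * μ (θ^[n] ω) (firstCyl (x n) ∩ B)) := by
        rw [show S + c = 2 * c + (S - c) by ring, Real.exp_add,
          ENNReal.ofReal_mul (Real.exp_nonneg _)]
        ring
    _ ≤ _ := by
        gcongr
        exact le_measure_cylinder_inter_preimage hr hμ hφ hx n hB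

end CylinderEstimates

open ProbabilityTheory (Kernel IsFiniteKernel IsMarkovKernel IsSFiniteKernel)

open scoped ProbabilityTheory

section FibreZeroOneLaw

variable {Ω : Type*} [MeasurableSpace Ω] {P : Measure Ω} {θ : Ω → Ω} {W : Ω → Set ℕ}
  {A : Ω → ℕ → ℕ → Prop} {φ : Ω → Seq → ℝ} {r : ℝ} {κ : Ω → ℝ}

/-- Fibrewise topological mixing: for a.e. `ω`, every pair of admissible symbols `a ∈ 𝒲¹_ω`,
`b ∈ 𝒲¹_{θⁿω}` is joined by an `ω`-admissible word for all large `n`. -/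
def IsTopMixing (θ : Ω → Ω) (W : Ω → Set ℕ) (A : Ω → ℕ → ℕ → Prop) (P : Measure Ω) : Prop :=
  ∀ a b : ℕ, ∀ᵐ ω ∂P, ∀ᶠ n in atTop, a ∈ W ω → b ∈ W (θ^[n] ω) →
    ∃ x ∈ Xfib θ W A ω, x 0 = a ∧ x n = b

/-- The big images property with respect to `S ⊆ Ω` and `I ⊆ ℕ`, phrased along `θ` so that it
makes sense for non-invertible `θ`. -/
def HasBigImages (θ : Ω → Ω) (W : Ω → Set ℕ) (A : Ω → ℕ → ℕ → Prop) (P : Measure Ω)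
    (S : Set Ω) (I : Finset ℕ) : Prop :=
  ∀ᵐ ω ∂P, θ ω ∈ S → ∀ a ∈ W ω, ∃ b ∈ I, b ∈ W (θ ω) ∧ A ω a b

lemma ae_forall_iterate (hθ : Measure.QuasiMeasurePreserving θ P P) {p : Ω → Prop}
    (hp : ∀ᵐ ω ∂P, p ω) : ∀ᵐ ω ∂P, ∀ n, p (θ^[n] ω) :=
  ae_all_iff.2 fun n => (hθ.iterate n).ae hp

variable {m : Kernel Ω Seq} {t : Set (Ω × Seq)}

lemma measurable_measure_firstCyl_inter [IsSFiniteKernel m] (ht : MeasurableSet t) (a : ℕ) :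
    Measurable fun ω => m ω (firstCyl a ∩ Prod.mk ω ⁻¹' t) :=
  Kernel.measurable_kernel_prodMk_left (κ := m)
    ((measurable_snd (measurableSet_firstCyl a)).inter ht)

lemma exists_measure_firstCyl_inter_ne_zero (hne : ¬ ∀ᵐ ω ∂P, m ω (Prod.mk ω ⁻¹' t) = 0) :
    ∃ b, P {ω | m ω (firstCyl b ∩ Prod.mk ω ⁻¹' t) ≠ 0} ≠ 0 := by
  contrapose! hne
  filter_upwards [ae_all_iff.2 fun b => ae_iff.2 (hne b)] with ω hω
  refine measure_mono_null (fun x hx => ?_) (measure_iUnion_null hω)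
  exact Set.mem_iUnion.2 ⟨x 0, rfl, hx⟩

lemma ae_forall_measure_firstCyl_inter_ne_zero [IsSFiniteKernel m] [IsFiniteMeasure P]
    (hθ : Ergodic θ P) (hr : 0 ≤ r) (hmix : IsTopMixing θ W A P)
    (hm : ∀ᵐ ω ∂P, IsConformalAt θ W A φ m ω) (hφ : LocHolder2 θ W A P φ r κ)
    (ht : MeasurableSet t) (htinv : (fun p : Ω × Seq => (θ p.1, shift p.2)) ⁻¹' t = t)
    (hne : ¬ ∀ᵐ ω ∂P, m ω (Prod.mk ω ⁻¹' t) = 0) :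
    ∀ᵐ ω ∂P, ∀ a ∈ W ω, m ω (firstCyl a ∩ Prod.mk ω ⁻¹' t) ≠ 0 := by
  obtain ⟨b, hb⟩ := exists_measure_firstCyl_inter_ne_zero hne
  have hmeas := measurable_measure_firstCyl_inter (m := m) ht b (measurableSet_singleton 0).compl
  have hrec := ae_frequently_mem hθ hmeas.nullMeasurableSet hb
  filter_upwards [hrec, ae_all_iff.2 fun a => hmix a b,
    ae_forall_iterate hθ.quasiMeasurePreserving hm,
    ae_forall_iterate hθ.quasiMeasurePreserving hφ] with ω hrecω hmixω hmω hφω a ha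
  obtain ⟨n, hn, hjoin⟩ := (hrecω.and_eventually (hmixω a)).exists
  obtain ⟨y, ⟨hyb, -⟩, hy⟩ := (hmω n).exists_mem_Xfib hn
  obtain ⟨x, hx, rfl, hxn⟩ := hjoin ha ((show y 0 = b from hyb) ▸ hy.1 0)
  rw [← preimage_iterate_shift_preimage_mk htinv ω n]
  exact measure_firstCyl_inter_ne_zero hr hmω hφω hx (measurable_prodMk_left ht) (hxn ▸ hn)

lemma exists_measure_setOf_measure_firstCyl_le_ne_zero [IsFiniteKernel m]
    (hθ : MeasurePreserving θ P P) {S : Set Ω} (hS : MeasurableSet S) (hS0 : P S ≠ 0)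
    {I : Finset ℕ} (hI : HasBigImages θ W A P S I) (hVar : Var1Fin θ W A P φ S)
    (hm : ∀ᵐ ω ∂P, IsConformalAt θ W A φ m ω)
    (ht : MeasurableSet t) (htinv : (fun p : Ω × Seq => (θ p.1, shift p.2)) ⁻¹' t = t)
    (hpos : ∀ᵐ ω ∂P, ∀ a ∈ W ω, m ω (firstCyl a ∩ Prod.mk ω ⁻¹' t) ≠ 0) :
    ∃ N : ℕ, P {ω | ∀ a, m ω (firstCyl a) ≤ N * m ω (firstCyl a ∩ Prod.mk ω ⁻¹' t)} ≠ 0 := by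
  by_contra! hnull
  refine hS0 ((hθ.measure_preimage hS.nullMeasurableSet).symm.trans
    (measure_mono_null_ae ?_ (measure_iUnion_null hnull)))
  filter_upwards [hI, hVar, hm, hθ.quasiMeasurePreserving.ae hm,
    hθ.quasiMeasurePreserving.ae hpos] with ω hIω hVarω hmω hmθω hposω hωS
  obtain ⟨N, hN⟩ := exists_nat_forall_measure_firstCyl_le hmω hmθω (hVarω hωS) (hIω hωS)
    (measurable_prodMk_left ht) hposω
  rw [preimage_shift_preimage_mk htinv] at hN
  exact Set.mem_iUnion.2 ⟨N, hN⟩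

theorem fibre_null_or_conull [IsFiniteKernel m] [IsFiniteMeasure P]
    (hθ : Ergodic θ P) (hr0 : 0 ≤ r) (hr1 : r < 1) (hmix : IsTopMixing θ W A P)
    {S : Set Ω} (hS : MeasurableSet S) (hS0 : P S ≠ 0) {I : Finset ℕ}
    (hI : HasBigImages θ W A P S I) (hVar : Var1Fin θ W A P φ S)
    (hκ : Integrable κ P) (hφ : LocHolder2 θ W A P φ r κ)
    (hm : ∀ᵐ ω ∂P, IsConformalAt θ W A φ m ω)
    (ht : MeasurableSet t) (htinv : (fun p : Ω × Seq => (θ p.1, shift p.2)) ⁻¹' t = t) :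
    (∀ᵐ ω ∂P, m ω (Prod.mk ω ⁻¹' t) = 0) ∨ ∀ᵐ ω ∂P, m ω (Prod.mk ω ⁻¹' t)ᶜ = 0 := by
  refine or_iff_not_imp_left.2 fun hne => ?_
  have hpos := ae_forall_measure_firstCyl_inter_ne_zero hθ hr0 hmix hm hφ ht htinv hne
  obtain ⟨N, hN⟩ := exists_measure_setOf_measure_firstCyl_le_ne_zero hθ.toMeasurePreserving
    hS hS0 hI hVar hm ht htinv hpos
  have hmeas : MeasurableSet
      {ω | ∀ a, m ω (firstCyl a) ≤ N * m ω (firstCyl a ∩ Prod.mk ω ⁻¹' t)} := by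
    simp only [Set.ofPred_forall]
    exact .iInter fun a => measurableSet_le (m.measurable_coe (measurableSet_firstCyl a))
      ((measurable_measure_firstCyl_inter ht a).const_mul _)
  obtain ⟨c, hc⟩ := exists_ae_frequently_mem_and_le hθ hmeas.nullMeasurableSet hN
    (integrable_distortion hθ.toMeasurePreserving hκ) (distortion_nonneg hr0)
    (integral_distortion_le hr0 hr1 hθ.toMeasurePreserving hκ)
    fun n ω => le_add_of_nonneg_left (by positivity)
  filter_upwards [hc, hm, ae_forall_iterate hθ.quasiMeasurePreserving hm,
    ae_forall_iterate hθ.quasiMeasurePreserving hφ] with ω hcω hmω hmorb hφorb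
  refine measure_compl_eq_zero_of_frequently_cylinder (measurable_prodMk_left ht)
    (D := Real.exp (2 * c) * N) ?_
  filter_upwards [hmω.ae_mem] with x hx
  refine hcω.mono fun n ⟨hn, hnc⟩ => ?_
  have hcyl := measure_cylinder_le_of_measure_firstCyl_le hr0 hmorb hφorb hx
    (measurable_prodMk_left ht) (hn (x n))
  rw [preimage_iterate_shift_preimage_mk htinv] at hcyl
  have hreal := ENNReal.toReal_mono (by finiteness) hcyl
  rw [ENNReal.toReal_mul, ENNReal.toReal_mul, ENNReal.toReal_ofReal (Real.exp_nonneg _),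
    ENNReal.toReal_natCast] at hreal
  refine hreal.trans (mul_le_mul_of_nonneg_right ?_ measureReal_nonneg)
  gcongr

end FibreZeroOneLaw

section Normalisation

variable {Ω : Type*} {θ : Ω → Ω} {W : Ω → Set ℕ} {A : Ω → ℕ → ℕ → Prop} {φ : Ω → Seq → ℝ}
  {lam : Ω → ℝ} {μ : Ω → Measure Seq} {ω : Ω}

/-- The normalised potential `φ_ω - log λ_ω`, for which the eigenvalue `λ_ω` becomes `1`. -/
noncomputable def normalizedPotential (φ : Ω → Seq → ℝ) (lam : Ω → ℝ) (ω : Ω) (x : Seq) : ℝ :=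
  φ ω x - Real.log (lam ω)

lemma exp_normalizedPotential (hlam : 0 < lam ω) (x : Seq) :
    Real.exp (normalizedPotential φ lam ω x) = (lam ω)⁻¹ * Real.exp (φ ω x) := by
  rw [normalizedPotential, Real.exp_sub, Real.exp_log hlam, div_eq_inv_mul]

lemma Lr_normalizedPotential (hlam : 0 < lam ω) (f : Seq → ℝ) (x : Seq) :
    Lr θ W A (normalizedPotential φ lam) ω f x = (lam ω)⁻¹ * Lr θ W A φ ω f x := by
  simp only [Lr, exp_normalizedPotential hlam, ← tsum_mul_left, mul_ite, mul_zero, mul_assoc]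

lemma dualLr_normalizedPotential (hlam : 0 < lam ω) (ν : Measure Seq) :
    dualLr θ W A (normalizedPotential φ lam) ω ν =
      (ENNReal.ofReal (lam ω))⁻¹ • dualLr θ W A φ ω ν := by
  have hind (y : Seq) : ENNReal.ofReal ((Xfib θ W A ω).indicator
      (fun y => Real.exp (normalizedPotential φ lam ω y)) y) = (ENNReal.ofReal (lam ω))⁻¹ *
        ENNReal.ofReal ((Xfib θ W A ω).indicator (fun y => Real.exp (φ ω y)) y) := by
    rw [← ENNReal.ofReal_inv_of_pos hlam, ← ENNReal.ofReal_mul (inv_nonneg.2 hlam.le)]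
    simp only [exp_normalizedPotential hlam, Set.indicator_const_mul]
  have hne : (ENNReal.ofReal (lam ω))⁻¹ ≠ ⊤ := ENNReal.inv_ne_top.2 (ENNReal.ofReal_pos.2 hlam).ne'
  ext B hB
  simp only [dualLr, hind, Measure.smul_apply, Measure.sum_apply _ hB, smul_eq_mul,
    ← ENNReal.tsum_mul_left]
  refine tsum_congr fun a => ?_
  rw [← smul_eq_mul, ← Measure.smul_apply, ← Measure.map_smul, ← withDensity_smul' _ _ hne]
  rfl

lemma IsConformalAt.of_dualLr_eq_smul (hlam : 0 < lam ω)
    (hdual : dualLr θ W A φ ω (μ (θ ω)) = ENNReal.ofReal (lam ω) • μ ω)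
    (hmem : ∀ᵐ x ∂μ ω, x ∈ Xfib θ W A ω) :
    IsConformalAt θ W A (normalizedPotential φ lam) μ ω where
  dualLr_eq := by
    rw [dualLr_normalizedPotential hlam, hdual, smul_smul,
      ENNReal.inv_mul_cancel (ENNReal.ofReal_pos.2 hlam).ne' ENNReal.ofReal_ne_top, one_smul]
  ae_mem := hmem

variable [MeasurableSpace Ω] {P : Measure Ω}

lemma LocHolder2.normalizedPotential {r : ℝ} {κ : Ω → ℝ} (hφ : LocHolder2 θ W A P φ r κ) :
    LocHolder2 θ W A P (normalizedPotential φ lam) r κ := by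
  simpa only [LocHolder2, RTMC.normalizedPotential, sub_sub_sub_cancel_right] using hφ

lemma Var1Fin.normalizedPotential {S : Set Ω} (hφ : Var1Fin θ W A P φ S) :
    Var1Fin θ W A P (normalizedPotential φ lam) S := by
  simpa only [Var1Fin, RTMC.normalizedPotential, sub_sub_sub_cancel_right] using hφ

end Normalisation

section FibreInvariance

variable {Ω : Type*} {θ : Ω → Ω} {W : Ω → Set ℕ} {A : Ω → ℕ → ℕ → Prop} {φ : Ω → Seq → ℝ}
  {r : ℝ} {κ : Ω → ℝ} {μ : Ω → Measure Seq} {ω : Ω}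

lemma IsLocHolder2At.continuousOn (hφ : IsLocHolder2At θ W A φ r κ ω) (hr0 : 0 ≤ r) (hr1 : r < 1) :
    ContinuousOn (φ ω) (Xfib θ W A ω) := by
  intro x hx
  rw [ContinuousWithinAt, Metric.tendsto_nhds]
  intro ε hε
  have hlim : Tendsto (fun n : ℕ => κ ω * r ^ n) atTop (nhds 0) := by
    simpa using (tendsto_pow_atTop_nhds_zero_of_lt_one hr0 hr1).const_mul (κ ω)
  obtain ⟨n, hnε, hn⟩ := ((hlim.eventually_lt_const hε).and (eventually_ge_atTop 2)).exists
  have hcyl : PiNat.cylinder x n ∈ nhds x :=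
    (PiNat.isOpen_cylinder (fun _ : ℕ => ℕ) x n).mem_nhds (PiNat.self_mem_cylinder x n)
  filter_upwards [mem_nhdsWithin_of_mem_nhds hcyl, self_mem_nhdsWithin] with y hy hyX
  exact (hφ n hn y hyX x hx hy).trans_lt hnε

lemma IsLocHolder2At.measurable_indicator_exp (hφ : IsLocHolder2At θ W A φ r κ ω) (hr0 : 0 ≤ r)
    (hr1 : r < 1) : Measurable ((Xfib θ W A ω).indicator fun y => Real.exp (φ ω y)) := by
  classical
  rw [← Set.piecewise_eq_indicator]
  exact ContinuousOn.measurable_piecewise (hφ.continuousOn hr0 hr1).rexp continuousOn_const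
    measurableSet_Xfib

lemma lintegral_dualLr (hφ : Measurable ((Xfib θ W A ω).indicator fun y => Real.exp (φ ω y)))
    (ν : Measure Seq) {f : Seq → ENNReal} (hf : Measurable f) :
    ∫⁻ x, f x ∂dualLr θ W A φ ω ν = ∫⁻ x, ∑' a, ENNReal.ofReal
      ((Xfib θ W A ω).indicator (fun y => Real.exp (φ ω y)) (cons a x)) * f (cons a x) ∂ν := by
  have hw (a : ℕ) : Measurable fun x => ENNReal.ofReal
      ((Xfib θ W A ω).indicator (fun y => Real.exp (φ ω y)) (cons a x)) :=
    (hφ.comp (measurable_cons a)).ennreal_ofReal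
  have hfc (a : ℕ) : Measurable fun x => f (cons a x) := hf.comp (measurable_cons a)
  rw [dualLr, lintegral_sum_measure]
  refine Eq.trans (tsum_congr fun a => ?_)
    (lintegral_tsum fun a => ((hw a).mul (hfc a)).aemeasurable).symm
  rw [lintegral_map hf (measurable_cons a)]
  exact lintegral_withDensity_eq_lintegral_mul _ (hw a) (hfc a)

lemma tsum_ofReal_exp_mul_eq_ofReal_Lr {f : Seq → ℝ} {x : Seq} (hf : ∀ y ∈ Xfib θ W A ω, 0 ≤ f y)
    (hL : Lr θ W A φ ω f x ≠ 0) :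
    ∑' a, ENNReal.ofReal ((Xfib θ W A ω).indicator (fun y => Real.exp (φ ω y)) (cons a x)) *
      ENNReal.ofReal (f (cons a x)) = ENNReal.ofReal (Lr θ W A φ ω f x) := by
  have hsum := not_imp_comm.1 tsum_eq_zero_of_not_summable hL
  rw [Lr, ENNReal.ofReal_tsum_of_nonneg (fun a => ?_) hsum]
  · refine tsum_congr fun a => ?_
    split_ifs with ha
    · rw [Set.indicator_of_mem ha, ENNReal.ofReal_mul (Real.exp_nonneg _)]
    · rw [Set.indicator_of_notMem ha, ENNReal.ofReal_zero, zero_mul]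
  · split_ifs with ha
    · exact mul_nonneg (Real.exp_nonneg _) (hf _ ha)
    · exact le_rfl

lemma IsConformalAt.map_shift_withDensity (hμ : IsConformalAt θ W A φ μ ω)
    (hμ' : IsConformalAt θ W A φ μ (θ ω))
    (hφ : Measurable ((Xfib θ W A ω).indicator fun y => Real.exp (φ ω y)))
    {f g : Seq → ℝ} (hf : Measurable f) (hf0 : ∀ x ∈ Xfib θ W A ω, 0 ≤ f x)
    (hg0 : ∀ x ∈ Xfib θ W A (θ ω), 0 < g x)
    (hL : ∀ x ∈ Xfib θ W A (θ ω), Lr θ W A φ ω f x = g x) :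
    ((μ ω).withDensity fun x => ENNReal.ofReal (f x)).map shift =
      (μ (θ ω)).withDensity fun x => ENNReal.ofReal (g x) := by
  ext B hB
  rw [Measure.map_apply measurable_shift hB, withDensity_apply _ (measurable_shift hB),
    withDensity_apply _ hB, ← lintegral_indicator (measurable_shift hB), ← lintegral_indicator hB]
  conv_lhs => rw [← hμ.dualLr_eq]
  rw [lintegral_dualLr hφ _ (hf.ennreal_ofReal.indicator (measurable_shift hB))]
  refine lintegral_congr_ae ?_
  filter_upwards [hμ'.ae_mem] with x hx
  have htsum := tsum_ofReal_exp_mul_eq_ofReal_Lr hf0 ((hL x hx).trans_ne (hg0 x hx).ne')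
  rw [hL x hx] at htsum
  by_cases hxB : x ∈ B
  · rw [Set.indicator_of_mem hxB, ← htsum]
    exact tsum_congr fun a => congrArg _ (Set.indicator_of_mem (s := shift ⁻¹' B) hxB _)
  · rw [Set.indicator_of_notMem hxB]
    refine ENNReal.tsum_eq_zero.2 fun a => ?_
    rw [Set.indicator_of_notMem (s := shift ⁻¹' B) hxB, mul_zero]

end FibreInvariance

section SkewProducts

variable {Ω E : Type*} [MeasurableSpace Ω] [MeasurableSpace E] {P : Measure Ω}

lemma exists_isMarkovKernel_ae_eq [Nonempty E] {μ : Ω → Measure E}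
    (hμ : ∀ B : Set E, MeasurableSet B → Measurable fun ω => μ ω B)
    (hprob : ∀ᵐ ω ∂P, IsProbabilityMeasure (μ ω)) :
    ∃ m : Kernel Ω E, IsMarkovKernel m ∧ ∀ᵐ ω ∂P, m ω = μ ω := by
  classical
  obtain ⟨e⟩ := ‹Nonempty E›
  have hs : MeasurableSet {ω | μ ω Set.univ = 1} := hμ _ .univ (measurableSet_singleton 1)
  refine ⟨Kernel.piecewise hs ⟨μ, Measure.measurable_of_measurable_coe _ hμ⟩
    (Kernel.const Ω (Measure.dirac e)), ⟨fun ω => ?_⟩, ?_⟩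
  · rw [Kernel.piecewise_apply]
    split_ifs with hω
    · exact ⟨hω⟩
    · exact Measure.dirac.isProbabilityMeasure
  · filter_upwards [hprob] with ω hω
    exact (Kernel.piecewise_apply ..).trans (if_pos measure_univ)

lemma isProbabilityMeasure_withDensity_ofReal {μ : Measure E} {f : E → ℝ} (hf0 : 0 ≤ᵐ[μ] f)
    (hf1 : ∫ x, f x ∂μ = 1) :
    IsProbabilityMeasure (μ.withDensity fun x => ENNReal.ofReal (f x)) := by
  have hint : Integrable f μ := .of_integral_ne_zero (hf1.trans_ne one_ne_zero)
  refine ⟨?_⟩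
  rw [withDensity_apply _ .univ, Measure.restrict_univ,
    ← ofReal_integral_eq_lintegral_ofReal hint hf0, hf1, ENNReal.ofReal_one]

lemma exists_isMarkovKernel_ae_eq_withDensity [Nonempty E] (m : Kernel Ω E) [IsSFiniteKernel m]
    {h : Ω → E → ℝ} (hh : Measurable (Function.uncurry h)) (hh0 : ∀ᵐ ω ∂P, 0 ≤ᵐ[m ω] h ω)
    (hh1 : ∀ᵐ ω ∂P, ∫ x, h ω x ∂m ω = 1) :
    ∃ ν : Kernel Ω E, IsMarkovKernel ν ∧
      ∀ᵐ ω ∂P, ν ω = (m ω).withDensity fun x => ENNReal.ofReal (h ω x) := by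
  refine exists_isMarkovKernel_ae_eq (fun B hB => ?_) ?_
  · simp only [withDensity_apply _ hB]
    exact hh.ennreal_ofReal.setLIntegral_kernel_prod_right hB
  · filter_upwards [hh0, hh1] with ω hω0 hω1
    exact isProbabilityMeasure_withDensity_ofReal hω0 hω1

lemma measurePreserving_compProd_skewProduct [SFinite P] {θ : Ω → Ω} {T : Ω → E → E}
    {ν : Kernel Ω E} [IsSFiniteKernel ν] (hθ : MeasurePreserving θ P P)
    (hT : Measurable (Function.uncurry T)) (hν : ∀ᵐ ω ∂P, (ν ω).map (T ω) = ν (θ ω)) :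
    MeasurePreserving (fun p : Ω × E => (θ p.1, T p.1 p.2)) (P ⊗ₘ ν) (P ⊗ₘ ν) := by
  have hF : Measurable fun p : Ω × E => (θ p.1, T p.1 p.2) :=
    (hθ.measurable.comp measurable_fst).prodMk hT
  refine ⟨hF, ?_⟩
  ext s hs
  rw [Measure.map_apply hF hs, Measure.compProd_apply (hF hs), Measure.compProd_apply hs,
    ← hθ.lintegral_comp (Kernel.measurable_kernel_prodMk_left hs)]
  refine lintegral_congr_ae ?_
  filter_upwards [hν] with ω hω
  rw [← hω, Measure.map_apply hT.of_uncurry_left (measurable_prodMk_left hs)]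
  rfl

lemma ergodic_compProd_of_fibre_null_or_conull [SFinite P] {F : Ω × E → Ω × E}
    {ν : Kernel Ω E} [IsSFiniteKernel ν] (hF : MeasurePreserving F (P ⊗ₘ ν) (P ⊗ₘ ν))
    (h01 : ∀ t, MeasurableSet t → F ⁻¹' t = t →
      (∀ᵐ ω ∂P, ν ω (Prod.mk ω ⁻¹' t) = 0) ∨ ∀ᵐ ω ∂P, ν ω (Prod.mk ω ⁻¹' t)ᶜ = 0) :
    Ergodic F (P ⊗ₘ ν) where
  toMeasurePreserving := hF
  aeconst_set t ht hinv := by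
    refine eventuallyConst_set.2 ((h01 t ht hinv).symm.imp (fun h => ?_) fun h => ?_)
    · exact (Measure.ae_compProd_iff ht).2 h
    · refine (Measure.ae_compProd_iff ht.compl).2 (h.mono fun ω hω => ?_)
      exact measure_eq_zero_iff_ae_notMem.1 hω

end SkewProducts

section Equilibrium

variable {Ω : Type*} [MeasurableSpace Ω] {P : Measure Ω} {θ θinv : Ω → Ω} {W : Ω → Set ℕ}
  {A : Ω → ℕ → ℕ → Prop} {φ : Ω → Seq → ℝ}

lemma IsRandomProbMeasure.ae_mem_Xfib {μ : Ω → Measure Seq} (hμ : IsRandomProbMeasure θ W A P μ) :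
    ∀ᵐ ω ∂P, ∀ᵐ x ∂μ ω, x ∈ Xfib θ W A ω := by
  filter_upwards [hμ.2] with ω ⟨_, hω⟩
  exact (prob_compl_eq_zero_iff measurableSet_Xfib).2 hω

lemma ae_map_shift_eq_of_ae_eq_withDensity {r : ℝ} {κ : Ω → ℝ} {m ν : Kernel Ω Seq}
    {h : Ω → Seq → ℝ} (hθ : Measure.QuasiMeasurePreserving θ P P) (hr0 : 0 ≤ r) (hr1 : r < 1)
    (hφ : LocHolder2 θ W A P φ r κ) (hm : ∀ᵐ ω ∂P, IsConformalAt θ W A φ m ω)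
    (hhm : Measurable (Function.uncurry h)) (hpos : ∀ᵐ ω ∂P, ∀ x ∈ Xfib θ W A ω, 0 < h ω x)
    (hL : ∀ᵐ ω ∂P, ∀ x ∈ Xfib θ W A (θ ω), Lr θ W A φ ω (h ω) x = h (θ ω) x)
    (hν : ∀ᵐ ω ∂P, ν ω = (m ω).withDensity fun x => ENNReal.ofReal (h ω x)) :
    ∀ᵐ ω ∂P, (ν ω).map shift = ν (θ ω) := by
  filter_upwards [hφ, hm, hθ.ae hm, hpos, hθ.ae hpos, hL, hν, hθ.ae hν]
    with ω hφω hmω hmθω hposω hposθω hLω hνω hνθω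
  rw [hνω, hνθω]
  exact hmω.map_shift_withDensity hmθω (IsLocHolder2At.measurable_indicator_exp hφω hr0 hr1)
    hhm.of_uncurry_left (fun x hx => (hposω x hx).le) hposθω hLω

lemma ae_isConformalAt_normalizedPotential {lam : Ω → ℝ} {μ : Ω → Measure Seq} {m : Kernel Ω Seq}
    (hθ : Measure.QuasiMeasurePreserving θ P P) (hlam : ∀ᵐ ω ∂P, 0 < lam ω)
    (hdual : ∀ᵐ ω ∂P, dualLr θ W A φ ω (μ (θ ω)) = ENNReal.ofReal (lam ω) • μ ω)
    (hμ : IsRandomProbMeasure θ W A P μ) (hm : ∀ᵐ ω ∂P, m ω = μ ω) :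
    ∀ᵐ ω ∂P, IsConformalAt θ W A (normalizedPotential φ lam) m ω := by
  filter_upwards [hlam, hdual, hμ.ae_mem_Xfib, hm, hθ.ae hm] with ω hlamω hdualω hXω hmω hmθω
  rw [← hmω, ← hmθω] at hdualω
  exact .of_dualLr_eq_smul hlamω hdualω (hmω ▸ hXω)

theorem random_equilibrium_invariant_ergodic_general [IsProbabilityMeasure P] (hθ : Ergodic θ P)
    {r : ℝ} (hr0 : 0 ≤ r) (hr1 : r < 1) (hmix : IsTopMixing θ W A P)
    {S : Set Ω} (hS : MeasurableSet S) (hS0 : P S ≠ 0) {I : Finset ℕ}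
    (hI : HasBigImages θ W A P S I)
    {κ : Ω → ℝ} (hκ : Integrable κ P) (hφ : LocHolder2 θ W A P φ r κ)
    (hVar : Var1Fin θ W A P φ S)
    {lam : Ω → ℝ} (hlam : ∀ᵐ ω ∂P, 0 < lam ω)
    {h : Ω → Seq → ℝ} (hhm : Measurable (Function.uncurry h))
    {μ : Ω → Measure Seq} (hμ : IsRandomProbMeasure θ W A P μ)
    (hRuelle : ∀ᵐ ω ∂P,
      (∀ x ∈ Xfib θ W A ω, 0 < h ω x) ∧
      (∀ x ∈ Xfib θ W A (θ ω), Lr θ W A φ ω (h ω) x = lam ω * h (θ ω) x) ∧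
      dualLr θ W A φ ω (μ (θ ω)) = ENNReal.ofReal (lam ω) • μ ω ∧
      (∫ x, h ω x ∂(μ ω)) = 1) :
    ∃ ρ : Measure (Ω × Seq), IsProbabilityMeasure ρ ∧
      (∀ s : Set (Ω × Seq), MeasurableSet s →
        ρ s = ∫⁻ ω, ((μ ω).withDensity fun x => ENNReal.ofReal (h ω x))
          {x | (ω, x) ∈ s} ∂P) ∧
      Ergodic (fun p : Ω × Seq => (θ p.1, shift p.2)) ρ := by
  simp only [eventually_and] at hRuelle
  obtain ⟨hpos, hL, hdual, hint⟩ := hRuelle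
  have hθq := hθ.quasiMeasurePreserving
  obtain ⟨m, _, hm⟩ := exists_isMarkovKernel_ae_eq hμ.1 (hμ.2.mono fun ω hω => hω.1)
  have hconf := ae_isConformalAt_normalizedPotential hθq hlam hdual hμ hm
  obtain ⟨ν, _, hν⟩ := exists_isMarkovKernel_ae_eq_withDensity (P := P) m hhm
    (by filter_upwards [hpos, hconf] with ω hω hconfω
        exact hconfω.ae_mem.mono fun x hx => (hω x hx).le)
    (by filter_upwards [hint, hm] with ω hω hmω using hmω ▸ hω)
  refine ⟨P ⊗ₘ ν, inferInstance, fun s hs => ?_, ?_⟩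
  · rw [Measure.compProd_apply hs]
    refine lintegral_congr_ae ?_
    filter_upwards [hν, hm] with ω hνω hmω
    rw [hνω, hmω]
    rfl
  refine ergodic_compProd_of_fibre_null_or_conull
    (measurePreserving_compProd_skewProduct (T := fun _ => shift) hθ.toMeasurePreserving
      (measurable_shift.comp measurable_snd)
      (ae_map_shift_eq_of_ae_eq_withDensity hθq hr0 hr1 hφ.normalizedPotential hconf hhm hpos
        ?_ hν)) fun t ht hinv => ?_
  · filter_upwards [hL, hlam] with ω hLω hlamω x hx
    rw [Lr_normalizedPotential hlamω, hLω x hx, inv_mul_cancel_left₀ hlamω.ne']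
  · have hac : ∀ᵐ ω ∂P, ν ω ≪ m ω := hν.mono fun ω hω => hω ▸ withDensity_absolutelyContinuous _ _
    exact (fibre_null_or_conull hθ hr0 hr1 hmix hS hS0 hI hVar.normalizedPotential hκ
      hφ.normalizedPotential hconf ht hinv).imp
      (fun h0 => (hac.and h0).mono fun ω hω => hω.1 hω.2)
      fun h0 => (hac.and h0).mono fun ω hω => hω.1 hω.2

lemma BIPData.isTopMixing (bip : BIPData θ θinv W A P) : IsTopMixing θ W A P := fun a b => by
  obtain ⟨N, -, hN⟩ := bip.mixing a b
  filter_upwards [hN] with ω hω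
  exact eventually_atTop.2 ⟨N ω, hω⟩

lemma BIPData.hasBigImages (bip : BIPData θ θinv W A P)
    (hθ : Measure.QuasiMeasurePreserving θ P P) (hinv : Function.LeftInverse θinv θ) :
    HasBigImages θ W A P bip.Ωbi bip.I := by
  filter_upwards [hθ.ae bip.bigImages] with ω hω
  rwa [hinv ω] at hω

lemma Var1Fin.mono {S S' : Set Ω} (hφ : Var1Fin θ W A P φ S') (hSS' : S ⊆ S') :
    Var1Fin θ W A P φ S :=
  Eventually.mono hφ fun _ hω hS => hω (hSS' hS)

end Equilibrium

/-- (The measure `h_ω dμ_ω dP` is invariant and ergodic.) Given the data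
`λ, {h_ω}, {μ_ω}` of the random Ruelle theorem, the probability measure on
`X = {(ω,x) : x ∈ X_ω} ⊆ Ω × ℕ^ℕ` whose fibre over `ω` is `h_ω dμ_ω` is invariant and
ergodic for the skew product `T(ω,x) = (θω, T_ω x)`. -/
theorem random_equilibrium_invariant_ergodic
    {Ω : Type*} [MeasurableSpace Ω] (P : Measure Ω) [IsProbabilityMeasure P]
    (θ θinv : Ω → Ω) (hθ : Ergodic θ P) (hθinv : Measurable θinv)
    (hinv : ∀ ω, θinv (θ ω) = ω ∧ θ (θinv ω) = ω)
    (W : Ω → Set ℕ) (A : Ω → ℕ → ℕ → Prop)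
    (hrow : ∀ ω, ∀ i ∈ W ω, ∃ j ∈ W (θ ω), A ω i j)
    (hcol : ∀ ω, ∀ i ∈ W (θ ω), ∃ j ∈ W ω, A ω j i)
    (φ : Ω → Seq → ℝ) (r : ℝ) (hr : 0 < r ∧ r < 1)
    (bip : BIPData θ θinv W A P)
    -- condition (H)
    (κ : Ω → ℝ) (hκm : Measurable κ) (hκ0 : ∀ᵐ ω ∂P, 0 ≤ κ ω)
    (hκint : Integrable κ P)
    (hφH : LocHolder2 θ W A P φ r κ)
    (hφ1 : Var1Fin θ W A P φ (bip.Ωbi ∪ bip.Ωbp))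
    -- condition (S)
    (hS : ∃ g : Ω → ℝ, Integrable g P ∧ ∀ᵐ ω ∂P, ∀ x ∈ Xfib θ W A ω,
      |Real.log (Lr θ W A φ (θinv ω) (fun _ => 1) x)| ≤ g ω)
    -- the data of the random Ruelle theorem
    (lam : Ω → ℝ) (hlam : ∀ᵐ ω ∂P, 0 < lam ω)
    (h : Ω → Seq → ℝ) (hhm : Measurable (Function.uncurry h))
    (μ : Ω → Measure Seq) (hμ : IsRandomProbMeasure θ W A P μ)
    (hRuelle : ∀ᵐ ω ∂P,
      (∀ x ∈ Xfib θ W A ω, 0 < h ω x) ∧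
      (∀ x ∈ Xfib θ W A (θ ω), Lr θ W A φ ω (h ω) x = lam ω * h (θ ω) x) ∧
      dualLr θ W A φ ω (μ (θ ω)) = ENNReal.ofReal (lam ω) • μ ω ∧
      (∫ x, h ω x ∂(μ ω)) = 1) :
    ∃ ρ : Measure (Ω × Seq), IsProbabilityMeasure ρ ∧
      (∀ s : Set (Ω × Seq), MeasurableSet s →
        ρ s = ∫⁻ ω, ((μ ω).withDensity fun x => ENNReal.ofReal (h ω x))
          {x | (ω, x) ∈ s} ∂P) ∧
      Ergodic (fun p : Ω × Seq => (θ p.1, shift p.2)) ρ := by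
  exact random_equilibrium_invariant_ergodic_general hθ hr.1.le hr.2 bip.isTopMixing bip.measΩbi
    bip.posΩbi.ne' (bip.hasBigImages hθ.quasiMeasurePreserving fun ω => (hinv ω).1) hκint hφH
    (hφ1.mono Set.subset_union_left) hlam hhm hμ hRuelle

end RTMC
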